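/- Let k ≥ 2 and let D ⊆ R^k be a β-column set. The minimum Hamming distance of the linear simplex β code S_k^β equals q^(s(k−1)): for every nonzero x ∈ R^k the number of g ∈ D with x·g ≠ 0 is at least q^(s(k−1)), and there exists a nonzero x ∈ R^k for which this number is exactly q^(s(k−1)). -/

import Mathlib

/-- A β-column set: a finite set `D ⊆ R^k` such that every `g ∈ D` has a unit coordinate,
and every vector of `R^k` with a unit coordinate is `u • g` for a unique unit `u` and a
unique `g ∈ D`. -/
def IsBetaColumnSet {R : Type} [CommRing R] {k : ℕ} (D : Finset (Fin k → R)) : Prop :=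
  (∀ g ∈ D, ∃ i, IsUnit (g i)) ∧
  (∀ w : Fin k → R, (∃ i, IsUnit (w i)) →
    ∃! ug : Rˣ × (Fin k → R), ug.2 ∈ D ∧ w = (ug.1 : R) • ug.2)

/-!
Let `𝔪` be the maximal ideal of the finite local ring `R` and `q = |R/𝔪|`. A nonzero `R`-module has
at least `q` elements, so a nonzero linear form on `R^k` takes nonzero values on a proportion of at
least `1 - 1/q = |Rˣ|/|R|` of the vectors. If `𝔪` annihilates `x`, then `x·w` depends only on `w`
modulo `𝔪`, so every `w` with `x·w ≠ 0` has a unit coordinate and is a unit multiple of exactly one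
column; dividing by `|Rˣ|` bounds the weight of `x` below by `|R|^(k-1)`. A general `x ≠ 0` has a
nonzero multiple annihilated by `𝔪`, whose support is contained in that of `x`. For `a ≠ 0`
annihilated by `𝔪`, the vector `a eᵢ` attains the bound, because `a * r ≠ 0` exactly when `r` is a
unit.

When `𝔪 = ⟨γ⟩`, each nonzero power satisfies `|⟨γ^j⟩| = q * |⟨γ^(j+1)⟩|`, since `⟨a⟩/𝔪a` is
one-dimensional over `R/𝔪` for every `a ≠ 0`; hence `|R| = q^s`.
-/

open IsLocalRing Submodule

theorem card_subtype_add_card_subtype_not {α : Type*} [Finite α] (p : α → Prop) :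
    Nat.card {a // p a} + Nat.card {a // ¬ p a} = Nat.card α := by
  classical
  rw [← Nat.card_sum, Nat.card_congr (Equiv.sumCompl p)]

theorem card_subtype_apply {ι α : Type*} [Finite ι] (i : ι) (p : α → Prop) :
    Nat.card {w : ι → α // p (w i)} = Nat.card {a // p a} * Nat.card α ^ (Nat.card ι - 1) := by
  classical
  have : Fintype ι := Fintype.ofFinite ι
  let e : {w : ι → α // p (w i)} ≃ {a // p a} × ({j // j ≠ i} → α) :=
    ((Equiv.funSplitAt i α).subtypeEquiv fun _ => Iff.rfl).trans
      (Equiv.prodSubtypeFstEquivSubtypeProd (p := p))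
  have hcompl : Nat.card {j // j ≠ i} = Nat.card ι - 1 := by
    simp [Nat.card_eq_fintype_card, Fintype.card_subtype_compl]
  rw [Nat.card_congr e, Nat.card_prod, Nat.card_fun, hcompl]

theorem card_subtype_isUnit (M : Type*) [Monoid M] : Nat.card {a : M // IsUnit a} = Nat.card Mˣ :=
  (Nat.card_congr Submonoid.unitsTypeEquivIsUnitSubmonoid.toEquiv).symm

theorem card_map_mul_card_quotient {R M N : Type*} [Ring R] [AddCommGroup M] [AddCommGroup N]
    [Module R M] [Module R N] {f : M →ₗ[R] N} {S : Submodule R M} (hS : LinearMap.ker f ≤ S) :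
    Nat.card (S.map f) * Nat.card (M ⧸ S) = Nat.card (LinearMap.range f) := by
  have hindex := AddSubgroup.relIndex_mul_index (toAddSubgroup_mono hS)
  rwa [show (LinearMap.ker f).toAddSubgroup = f.toAddMonoidHom.ker from rfl,
    AddSubgroup.relIndex_ker, AddSubgroup.index_ker] at hindex

theorem nilpotencyClass_eq_of_pow_pred_ne_zero {M : Type*} [MonoidWithZero M] [Nontrivial M]
    {x : M} {s : ℕ} (hs : 1 ≤ s) (hzero : x ^ s = 0) (hne : 2 ≤ s → x ^ (s - 1) ≠ 0) :
    nilpotencyClass x = s := by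
  obtain ⟨n, rfl⟩ := Nat.exists_eq_add_of_le' hs
  refine nilpotencyClass_eq_succ_iff.2 ⟨hzero, ?_⟩
  rcases n.eq_zero_or_pos with rfl | hn
  · simp
  · exact hne (by lia)

section LocalRing

variable {R M N : Type*} [CommRing R] [IsLocalRing R] [AddCommGroup M] [Module R M]
  [AddCommGroup N] [Module R N]

theorem card_units_add_card_maximalIdeal [Finite R] :
    Nat.card Rˣ + Nat.card (maximalIdeal R) = Nat.card R := by
  rw [← card_subtype_isUnit, ← card_subtype_add_card_subtype_not (IsUnit (M := R))]
  rfl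

theorem card_maximalIdeal_smul_span_mul_card_residueField {a : M} (ha : a ≠ 0) :
    Nat.card (maximalIdeal R • span R {a} : Submodule R M) * Nat.card (ResidueField R) =
      Nat.card (span R {a}) := by
  have hker : LinearMap.ker (LinearMap.toSpanSingleton R M a) ≤ maximalIdeal R :=
    le_maximalIdeal fun h => ha (by simpa using LinearMap.congr_fun (LinearMap.ker_eq_top.1 h) 1)
  have hmap : maximalIdeal R • span R {a} =
      Submodule.map (LinearMap.toSpanSingleton R M a) (maximalIdeal R) := by
    rw [LinearMap.span_singleton_eq_range, LinearMap.range_eq_map, ← map_smul'', smul_eq_mul,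
      Ideal.mul_top]
  rw [hmap, LinearMap.span_singleton_eq_range]
  exact card_map_mul_card_quotient hker

theorem card_residueField_le_card [Finite M] [Nontrivial M] :
    Nat.card (ResidueField R) ≤ Nat.card M := by
  obtain ⟨a, ha⟩ := exists_ne (0 : M)
  calc Nat.card (ResidueField R)
      ≤ Nat.card (maximalIdeal R • span R {a} : Submodule R M) * Nat.card (ResidueField R) :=
        Nat.le_mul_of_pos_left _ Nat.card_pos
    _ = Nat.card (span R {a}) := card_maximalIdeal_smul_span_mul_card_residueField ha
    _ ≤ Nat.card M := Finite.card_subtype_le _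

theorem card_eq_card_residueField_pow_nilpotencyClass {γ : R}
    (hmax : maximalIdeal R = Ideal.span {γ}) (hγ : IsNilpotent γ) :
    Nat.card R = Nat.card (ResidueField R) ^ nilpotencyClass γ := by
  have hfilt : ∀ j ≤ nilpotencyClass γ,
      Nat.card (Ideal.span {γ ^ j}) * Nat.card (ResidueField R) ^ j = Nat.card R := by
    intro j hj
    induction j with
    | zero => simp
    | succ j ih =>
      have hne : γ ^ j ≠ 0 := fun h => (Nat.sInf_le h).not_gt hj
      rw [← ih (by lia), ← Ideal.submodule_span_eq, ← Ideal.submodule_span_eq,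
        ← card_maximalIdeal_smul_span_mul_card_residueField hne, hmax, smul_eq_mul,
        Ideal.submodule_span_eq, Ideal.submodule_span_eq,
        Ideal.span_singleton_mul_span_singleton, pow_succ', pow_succ', mul_assoc]
  have hlast := hfilt _ le_rfl
  rw [pow_nilpotencyClass hγ] at hlast
  simpa using hlast.symm

theorem card_units_mul_card_le_card_mul_card_ne_zero [Finite R] [Finite M] {f : M →ₗ[R] N}
    (hf : f ≠ 0) : Nat.card Rˣ * Nat.card M ≤ Nat.card R * Nat.card {w // f w ≠ 0} := by
  have hrange : Nat.card (ResidueField R) ≤ Nat.card (LinearMap.range f) := by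
    have : Nontrivial (LinearMap.range f) :=
      nontrivial_iff_ne_bot.2 (mt LinearMap.range_eq_bot.1 hf)
    have : Finite (LinearMap.range f) := Finite.of_surjective _ f.surjective_rangeRestrict
    exact card_residueField_le_card
  have hker : Nat.card R * Nat.card (LinearMap.ker f) ≤ Nat.card (maximalIdeal R) * Nat.card M :=
    calc Nat.card R * Nat.card (LinearMap.ker f)
        = Nat.card (maximalIdeal R) *
            (Nat.card (LinearMap.ker f) * Nat.card (ResidueField R)) := by
          rw [card_eq_card_quotient_mul_card (maximalIdeal R), ResidueField]
          ring
      _ ≤ Nat.card (maximalIdeal R) *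
            (Nat.card (LinearMap.ker f) * Nat.card (LinearMap.range f)) := by gcongr
      _ = Nat.card (maximalIdeal R) * Nat.card M := by
          rw [card_eq_card_quotient_mul_card (LinearMap.ker f),
            Nat.card_congr f.quotKerEquivRange.toEquiv]
  have hsplit : Nat.card (LinearMap.ker f) + Nat.card {w // f w ≠ 0} = Nat.card M :=
    card_subtype_add_card_subtype_not (f · = 0)
  have hunits := card_units_add_card_maximalIdeal (R := R)
  suffices Nat.card Rˣ * Nat.card M + Nat.card R * Nat.card (LinearMap.ker f) ≤
      Nat.card R * Nat.card {w // f w ≠ 0} + Nat.card R * Nat.card (LinearMap.ker f) from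
    Nat.le_of_add_le_add_right this
  calc _ ≤ Nat.card Rˣ * Nat.card M + Nat.card (maximalIdeal R) * Nat.card M := by gcongr
    _ = Nat.card R * Nat.card M := by rw [← add_mul, hunits]
    _ = _ := by rw [← hsplit]; ring

theorem exists_smul_ne_zero_and_maximalIdeal_smul_eq_zero [IsArtinianRing R] {x : M}
    (hx : x ≠ 0) : ∃ r : R, r • x ≠ 0 ∧ ∀ c ∈ maximalIdeal R, c • r • x = 0 := by
  -- An associated prime of `R ∙ x` is the annihilator of a nonzero multiple of `x`, and it equals
  -- the maximal ideal because `R` has Krull dimension zero.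
  have : Nontrivial (span R {x}) := nontrivial_iff_ne_bot.2 (by simpa using hx)
  obtain ⟨P, hP⟩ := associatedPrimes.nonempty R (span R {x})
  obtain ⟨hprime, ⟨y, hy⟩, hcolon⟩ := isAssociatedPrime_iff.1 hP
  obtain ⟨r, rfl⟩ := mem_span_singleton.1 hy
  refine ⟨r, fun h => hprime.ne_top ?_, fun c hc => ?_⟩
  · simp [hcolon, h]
  · rw [← Ring.KrullDimLE.eq_maximalIdeal_of_isPrime P, hcolon] at hc
    simpa [mem_colon_singleton, Subtype.ext_iff] using hc

theorem exists_isUnit_apply_of_dotProduct_ne_zero {ι : Type*} [Fintype ι] {x w : ι → R}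
    (hx : ∀ c ∈ maximalIdeal R, c • x = 0) (hw : x ⬝ᵥ w ≠ 0) : ∃ i, IsUnit (w i) := by
  by_contra! hnonunit
  refine hw (Finset.sum_eq_zero fun i _ => ?_)
  rw [mul_comm]
  exact congrFun (hx (w i) (hnonunit i)) i

end LocalRing

namespace IsBetaColumnSet

variable {R : Type} [CommRing R] {k : ℕ} {D : Finset (Fin k → R)}

theorem card_units_mul_card_subtype (hD : IsBetaColumnSet D) {P : (Fin k → R) → Prop}
    (hP : ∀ (u : Rˣ) (w : Fin k → R), P (u • w) ↔ P w) :
    Nat.card Rˣ * Nat.card {g // g ∈ D ∧ P g} =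
      Nat.card {w : Fin k → R // (∃ i, IsUnit (w i)) ∧ P w} := by
  have hunit : ∀ (u : Rˣ), ∀ g ∈ D, ∃ i, IsUnit ((u • g) i) := fun u g hg =>
    (hD.1 g hg).imp fun i hi => by simpa [Units.smul_def] using hi
  rw [← Nat.card_prod]
  refine Nat.card_eq_of_bijective
    (fun p => ⟨p.1 • p.2.1, hunit p.1 _ p.2.2.1, (hP _ _).2 p.2.2.2⟩) ⟨?_, ?_⟩
  · rintro ⟨u, g, hg, hPg⟩ ⟨v, h, hh, hPh⟩ heq
    have heq : u • g = v • h := congrArg Subtype.val heq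
    obtain ⟨rfl, rfl⟩ : u = v ∧ g = h := Prod.mk.inj <|
      (hD.2 _ (hunit u g hg)).unique (y₁ := (u, g)) (y₂ := (v, h)) ⟨hg, rfl⟩ ⟨hh, heq⟩
    rfl
  · rintro ⟨w, hw, hPw⟩
    obtain ⟨⟨u, g⟩, ⟨hg, rfl⟩, -⟩ := hD.2 w hw
    exact ⟨(u, ⟨g, hg, (hP u g).1 hPw⟩), rfl⟩

variable [Finite R]

theorem card_isUnit_apply (hD : IsBetaColumnSet D) (i : Fin k) :
    Nat.card {g // g ∈ D ∧ IsUnit (g i)} = Nat.card R ^ (k - 1) := by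
  have hcount := hD.card_units_mul_card_subtype (P := fun w => IsUnit (w i)) fun u w => by
    simp [Units.smul_def]
  have hdrop : ∀ w : Fin k → R, (∃ j, IsUnit (w j)) ∧ IsUnit (w i) ↔ IsUnit (w i) :=
    fun w => and_iff_right_of_imp fun hi => ⟨i, hi⟩
  simp only [hdrop, card_subtype_apply i IsUnit, card_subtype_isUnit, Nat.card_fin] at hcount
  exact Nat.eq_of_mul_eq_mul_left Nat.card_pos hcount

variable [IsLocalRing R]

theorem card_pow_le_card_dotProduct_ne_zero (hD : IsBetaColumnSet D) {x : Fin k → R}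
    (hx : x ≠ 0) : Nat.card R ^ (k - 1) ≤ Nat.card {g // g ∈ D ∧ x ⬝ᵥ g ≠ 0} := by
  obtain ⟨i, -⟩ := Function.ne_iff.1 hx
  obtain ⟨r, hrx, hsocle⟩ := exists_smul_ne_zero_and_maximalIdeal_smul_eq_zero (R := R) hx
  have hform : dotProductBilin R R (r • x) ≠ 0 := fun h =>
    hrx (dotProduct_eq_zero _ fun w => LinearMap.congr_fun h w)
  have hsub : ∀ w : Fin k → R, (r • x) ⬝ᵥ w ≠ 0 → (∃ i, IsUnit (w i)) ∧ x ⬝ᵥ w ≠ 0 := fun w hw =>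
    ⟨exists_isUnit_apply_of_dotProduct_ne_zero hsocle hw,
      fun h => hw (by rw [smul_dotProduct, h, smul_zero])⟩
  have hpos : 0 < Nat.card R * Nat.card Rˣ := Nat.mul_pos Nat.card_pos Nat.card_pos
  refine Nat.le_of_mul_le_mul_left ?_ hpos
  calc Nat.card R * Nat.card Rˣ * Nat.card R ^ (k - 1)
      = Nat.card Rˣ * Nat.card (Fin k → R) := by
        rw [Nat.card_fun, Nat.card_fin, ← Nat.sub_add_cancel i.pos, pow_succ]
        simp only [Nat.add_sub_cancel]
        ring
    _ ≤ Nat.card R * Nat.card {w // (r • x) ⬝ᵥ w ≠ 0} :=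
        card_units_mul_card_le_card_mul_card_ne_zero hform
    _ ≤ Nat.card R * Nat.card {w : Fin k → R // (∃ i, IsUnit (w i)) ∧ x ⬝ᵥ w ≠ 0} := by
        gcongr
        exact Nat.card_mono (Set.toFinite _) hsub
    _ = Nat.card R * Nat.card Rˣ * Nat.card {g // g ∈ D ∧ x ⬝ᵥ g ≠ 0} := by
        rw [mul_assoc, hD.card_units_mul_card_subtype fun u w => by
          simp [Units.smul_def, dotProduct_smul]]

theorem exists_card_dotProduct_ne_zero_eq (hD : IsBetaColumnSet D) (hk : k ≠ 0) :
    ∃ x : Fin k → R, x ≠ 0 ∧ Nat.card {g // g ∈ D ∧ x ⬝ᵥ g ≠ 0} = Nat.card R ^ (k - 1) := by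
  have : NeZero k := ⟨hk⟩
  obtain ⟨a, ha, hsocle⟩ :=
    exists_smul_ne_zero_and_maximalIdeal_smul_eq_zero (R := R) (one_ne_zero (α := R))
  simp only [smul_eq_mul, mul_one] at ha hsocle
  have hmul : ∀ r, a * r ≠ 0 ↔ IsUnit r := fun r =>
    ⟨fun h => by_contra fun hr => h (by rw [mul_comm, hsocle r hr]), fun hr => by
      rwa [Ne, hr.mul_left_eq_zero]⟩
  refine ⟨Pi.single 0 a, by simpa using ha, ?_⟩
  simp only [single_dotProduct, hmul]
  exact hD.card_isUnit_apply 0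

end IsBetaColumnSet

theorem stmt_13_general {R : Type} [CommRing R] [IsLocalRing R] [Finite R] {k : ℕ} (hk : k ≠ 0)
    {D : Finset (Fin k → R)} (hD : IsBetaColumnSet D) :
    (∀ x : Fin k → R, x ≠ 0 →
      Nat.card R ^ (k - 1) ≤ Nat.card {g : Fin k → R // g ∈ D ∧ x ⬝ᵥ g ≠ 0}) ∧
    (∃ x : Fin k → R, x ≠ 0 ∧
      Nat.card {g : Fin k → R // g ∈ D ∧ x ⬝ᵥ g ≠ 0} = Nat.card R ^ (k - 1)) :=
  ⟨fun _ hx => hD.card_pow_le_card_dotProduct_ne_zero hx, hD.exists_card_dotProduct_ne_zero_eq hk⟩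

/-- For `k ≥ 2` and a β-column set `D ⊆ R^k`, the minimum Hamming distance of
the linear simplex β code `S_k^β` equals `q^(s(k−1))`: every nonzero `x ∈ R^k` gives at
least `q^(s(k−1))` indices `g ∈ D` with `x·g ≠ 0`, and some nonzero `x` attains exactly
`q^(s(k−1))`. -/
theorem stmt_13
    (R : Type) [CommRing R] [IsLocalRing R] [Fintype R]
    (γ : R) (s q : ℕ)
    (hs : 1 ≤ s)
    (hmax : IsLocalRing.maximalIdeal R = Ideal.span {γ})
    (hnil : γ ^ s = 0)
    (hnil' : 2 ≤ s → γ ^ (s - 1) ≠ 0)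
    (hq : Nat.card (R ⧸ Ideal.span ({γ} : Set R)) = q)
    (k : ℕ) (hk : 2 ≤ k)
    (D : Finset (Fin k → R)) (hD : IsBetaColumnSet D) :
    (∀ x : Fin k → R, x ≠ 0 →
      q ^ (s * (k - 1)) ≤ Nat.card {g : Fin k → R // g ∈ D ∧ ∑ i, x i * g i ≠ 0}) ∧
    (∃ x : Fin k → R, x ≠ 0 ∧
      Nat.card {g : Fin k → R // g ∈ D ∧ ∑ i, x i * g i ≠ 0} = q ^ (s * (k - 1))) := by
  have hcard : Nat.card R = q ^ s := by
    rw [card_eq_card_residueField_pow_nilpotencyClass hmax ⟨s, hnil⟩,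
      nilpotencyClass_eq_of_pow_pred_ne_zero hs hnil hnil', ← hq, ← hmax, ResidueField]
  rw [pow_mul, ← hcard]
  exact stmt_13_general (by lia) hD
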